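/- Let c > 0 and let v : (0,∞) → ℝ be a twice continuously differentiable function with v(r) > 0 and v'(r) > 0 for all r > 0, satisfying v''(r) + (2/r)v'(r) − 6v(r)/r² − c·v(r)³ = 0 for all r > 0. Then v(r) → +∞ as r → ∞; that is, v is unbounded. -/

import Mathlib

/-! The equation has the divergence form `(r² v')' = 6 v + c r² v³`. As `v` is increasing, for
`r ≥ 1` the right-hand side is at least `3 k r²` with `k = c v(1)³ / 3 > 0`. Integrating from `1`
gives `r² v' ≥ k (r³ - 1)`, hence `v' ≥ k (r - 1)`, and integrating again gives
`v ≥ k (r - 1)² / 2`, which tends to infinity. Both integrations are carried out by showing that the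
difference of the two sides is monotone on `[1, ∞)`. -/

/-- A positive increasing `C²` solution of
`v'' + (2/r)v' − 6v/r² − c v³ = 0` on `(0,∞)` (with `c > 0`) is unbounded:
`v(r) → +∞` as `r → ∞`. -/
theorem stmt10 (c : ℝ) (hc : 0 < c)
    (v : ℝ → ℝ) (hC2 : ContDiffOn ℝ 2 v (Set.Ioi 0))
    (hpos : ∀ r : ℝ, 0 < r → 0 < v r)
    (hmono : ∀ r : ℝ, 0 < r → 0 < deriv v r)
    (hode : ∀ r : ℝ, 0 < r →
      deriv (deriv v) r + (2 / r) * deriv v r - 6 * v r / r ^ 2 - c * (v r) ^ 3 = 0) :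
    Filter.Tendsto v Filter.atTop Filter.atTop := by
  have h1 : ∀ r : ℝ, 0 < r → HasDerivAt v (deriv v r) r := fun r hr =>
    ((hC2.differentiableOn (by norm_num)).differentiableAt (Ioi_mem_nhds hr)).hasDerivAt
  have h2 : ∀ r : ℝ, 0 < r → HasDerivAt (deriv v) (deriv (deriv v) r) r := fun r hr =>
    (((hC2.deriv_of_isOpen (m := 1) isOpen_Ioi (by norm_num)).differentiableOn
      (by norm_num)).differentiableAt (Ioi_mem_nhds hr)).hasDerivAt
  have hvmono : MonotoneOn v (Set.Ici 1) := by
    refine monotoneOn_of_hasDerivWithinAt_nonneg (f' := deriv v) (convex_Ici 1)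
      (fun r hr => (h1 r (zero_lt_one.trans_le hr)).continuousAt.continuousWithinAt) ?_ ?_ <;>
      rw [interior_Ici] <;> intro r hr <;> have hr0 : 0 < r := zero_lt_one.trans hr
    · exact (h1 r hr0).hasDerivWithinAt
    · exact (hmono r hr0).le
  obtain ⟨k, hk⟩ : ∃ k, k = c * v 1 ^ 3 / 3 := ⟨_, rfl⟩
  have hv1 := hpos 1 one_pos
  have hk0 : 0 < k := by rw [hk]; positivity
  have hd1 : ∀ r : ℝ, 0 < r → HasDerivAt (fun r => r ^ 2 * deriv v r - k * r ^ 3)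
      (6 * v r + c * r ^ 2 * v r ^ 3 - 3 * k * r ^ 2) r := by
    intro r hr
    refine (((hasDerivAt_pow 2 r).mul (h2 r hr)).sub
      ((hasDerivAt_pow 3 r).const_mul k)).congr_deriv ?_
    have h := hode r hr
    have hdd : deriv (deriv v) r
        = 6 * v r / r ^ 2 + c * v r ^ 3 - 2 / r * deriv v r := by linarith
    rw [hdd]
    push_cast
    field_simp
    ring
  have hflux : MonotoneOn (fun r => r ^ 2 * deriv v r - k * r ^ 3) (Set.Ici 1) := by
    refine monotoneOn_of_hasDerivWithinAt_nonneg
      (f' := fun r => 6 * v r + c * r ^ 2 * v r ^ 3 - 3 * k * r ^ 2) (convex_Ici 1)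
      (fun r hr => (hd1 r (zero_lt_one.trans_le hr)).continuousAt.continuousWithinAt) ?_ ?_ <;>
      rw [interior_Ici] <;> intro r hr <;> have hr0 : 0 < r := zero_lt_one.trans hr
    · exact (hd1 r hr0).hasDerivWithinAt
    · have hle : v 1 ≤ v r := hvmono Set.self_mem_Ici (Set.mem_Ici.2 (le_of_lt hr)) (le_of_lt hr)
      have h3 : c * r ^ 2 * v 1 ^ 3 ≤ c * r ^ 2 * v r ^ 3 := by gcongr
      have h4 := hpos r hr0
      simp only [hk]
      linarith
  have hder : ∀ r : ℝ, 1 < r → k * (r - 1) ≤ deriv v r := by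
    intro r hr
    have h := hflux Set.self_mem_Ici (Set.mem_Ici.2 hr.le) hr.le
    have h5 := hmono 1 one_pos
    simp only [one_pow, one_mul, mul_one] at h
    have hr2 : 0 < r ^ 2 := by positivity
    -- the factor `r²` can be cancelled because `r² (r - 1) ≤ r³ - 1`
    refine le_of_mul_le_mul_left ?_ hr2
    have h6 : 0 ≤ k * (r ^ 2 - 1) := mul_nonneg hk0.le (by nlinarith)
    nlinarith
  have hd2 : ∀ r : ℝ, 0 < r → HasDerivAt (fun r => v r - k / 2 * (r - 1) ^ 2)
      (deriv v r - k * (r - 1)) r := by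
    intro r hr
    refine ((h1 r hr).sub
      ((((hasDerivAt_id r).sub_const 1).pow 2).const_mul (k / 2))).congr_deriv ?_
    simp
    ring
  have hquad : MonotoneOn (fun r => v r - k / 2 * (r - 1) ^ 2) (Set.Ici 1) := by
    refine monotoneOn_of_hasDerivWithinAt_nonneg
      (f' := fun r => deriv v r - k * (r - 1)) (convex_Ici 1)
      (fun r hr => (hd2 r (zero_lt_one.trans_le hr)).continuousAt.continuousWithinAt) ?_ ?_ <;>
      rw [interior_Ici] <;> intro r hr
    · exact (hd2 r (zero_lt_one.trans hr)).hasDerivWithinAt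
    · exact sub_nonneg.2 (hder r hr)
  have hlim : Filter.Tendsto (fun r : ℝ => k / 2 * (r - 1) ^ 2) Filter.atTop Filter.atTop :=
    ((Filter.tendsto_pow_atTop two_ne_zero).comp
      (Filter.tendsto_atTop_add_const_right _ (-1) Filter.tendsto_id)).const_mul_atTop (half_pos hk0)
  refine Filter.tendsto_atTop_mono' _ ?_ hlim
  filter_upwards [Filter.eventually_ge_atTop 1] with r hr
  have h := hquad Set.self_mem_Ici (Set.mem_Ici.2 hr) hr
  simp only [sub_self] at h
  linarith
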